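/- If V ⊆ S^5 is a cube tiling code which is not simple, and Q is a simple component of V, then the polybox code V \ Q contains a twin pair. -/

import Mathlib

/- Common framework: polybox codes over a finite alphabet `S` with a
complementation `c : S → S` (an involution without fixed points). -/

namespace PolyboxPaper

variable {S : Type} [Fintype S] [DecidableEq S] {d : ℕ}

/-- Two words are dichotomous: they differ by complementation at some position. -/
def Dich (c : S → S) (v w : Fin d → S) : Prop := ∃ i, v i = c (w i)

instance (c : S → S) (v w : Fin d → S) : Decidable (Dich c v w) :=
  decidable_of_iff (∃ i, v i = c (w i)) Iff.rfl

/-- A polybox code: every two distinct words are dichotomous. -/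
def IsCode (c : S → S) (V : Finset (Fin d → S)) : Prop :=
  ∀ v ∈ V, ∀ w ∈ V, v ≠ w → Dich c v w

/-- A cube tiling code: a polybox code with `2 ^ d` words. -/
def CubeTiling (c : S → S) (V : Finset (Fin d → S)) : Prop :=
  IsCode c V ∧ V.card = 2 ^ d

/-- `v` and `w` form a twin pair in the `i`-th direction. -/
def TwinPair (c : S → S) (v w : Fin d → S) (i : Fin d) : Prop :=
  v i = c (w i) ∧ ∀ j, j ≠ i → v j = w j

/-- A code is twin pair free if no two of its words form a twin pair. -/
def TwinPairFree (c : S → S) (V : Finset (Fin d → S)) : Prop :=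
  ∀ v ∈ V, ∀ w ∈ V, ∀ i, ¬ TwinPair c v w i

/-- A single glue-and-cut operation: a twin pair `v, w` of `V` in the `i`-th
direction is replaced by a twin pair `q, t` in the `i`-th direction agreeing
with `v` (and `w`) at all positions `j ≠ i`. -/
def GCStep (c : S → S) (V W : Finset (Fin d → S)) : Prop :=
  ∃ (v w q t : Fin d → S) (i : Fin d), v ∈ V ∧ w ∈ V ∧ TwinPair c v w i ∧
    TwinPair c q t i ∧ (∀ j, j ≠ i → q j = v j) ∧ W = (V \ {v, w}) ∪ {q, t}

/-- `W` is obtained from `V` by gluing and cutting (finite, possibly empty,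
sequence of single glue-and-cut operations); equivalently, `V` and `W` are
strongly equivalent. -/
def GC (c : S → S) (V W : Finset (Fin d → S)) : Prop :=
  Relation.ReflTransGen (GCStep c) V W

/-- Passing from `V` to `W` by gluing and cutting keeping `Q` fixed:
every intermediate code contains `Q`. -/
def GCFix (c : S → S) (Q V W : Finset (Fin d → S)) : Prop :=
  Relation.ReflTransGen (fun A B => GCStep c A B ∧ Q ⊆ B) V W

/-- A realization: for each coordinate a map `f i : S → Set (X i)` taking
nonempty proper values and sending complementary letters to complementary sets. -/
def IsRealization (c : S → S) (X : Fin d → Type) (f : ∀ i, S → Set (X i)) : Prop :=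
  ∀ i s, (f i s).Nonempty ∧ f i s ≠ Set.univ ∧ f i (c s) = (f i s)ᶜ

/-- The box associated to a word by a realization. -/
def box {X : Fin d → Type} (f : ∀ i, S → Set (X i)) (v : Fin d → S) :
    Set (∀ i, X i) :=
  {x | ∀ i, x i ∈ f i (v i)}

/-- The word `w` is covered by the code `V` (`w ⊑ V`). -/
def CoveredWord (c : S → S) (w : Fin d → S) (V : Finset (Fin d → S)) : Prop :=
  ∀ (X : Fin d → Type) (f : ∀ i, S → Set (X i)), IsRealization c X f →
    box f w ⊆ ⋃ v ∈ V, box f v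

/-- `V ⊑ W`: every word of `V` is covered by `W`. -/
def Covered (c : S → S) (V W : Finset (Fin d → S)) : Prop :=
  ∀ v ∈ V, CoveredWord c v W

/-- Equivalent codes: `V ⊑ W` and `W ⊑ V`. -/
def Equivalent (c : S → S) (V W : Finset (Fin d → S)) : Prop :=
  Covered c V W ∧ Covered c W V

/-- `V ⊑̇ W`: `V ⊑ W` and no word of `V` belongs to any code obtained from `W`
by gluing and cutting. -/
def DotCovered (c : S → S) (V W : Finset (Fin d → S)) : Prop :=
  Covered c V W ∧ ∀ v ∈ V, ∀ W', GC c W W' → v ∉ W'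

/-- The density `δ(V, W)`. -/
noncomputable def delta (c : S → S) (V W : Finset (Fin d → S)) : ℕ∞ :=
  W.inf fun w => ((V.filter fun v => ¬ Dich c v w).card : ℕ∞)

/-- `C` is a minimal cover of the word `w`. -/
def MinCoverWord (c : S → S) (C : Finset (Fin d → S)) (w : Fin d → S) : Prop :=
  IsCode c C ∧ CoveredWord c w C ∧ ∀ q ∈ C, ¬ Dich c q w

/-- `C` is a minimal cover of the code `P`. -/
def MinCoverCode (c : S → S) (C P : Finset (Fin d → S)) : Prop :=
  IsCode c C ∧ Covered c P C ∧ ∀ q ∈ C, ∃ p ∈ P, ¬ Dich c q p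

/-- A simple polybox code. -/
def SimpleCode (c : S → S) (V : Finset (Fin d → S)) : Prop :=
  ∀ i : Fin d, ∃ s : S, ∀ v ∈ V, v i = s ∨ v i = c s

/-- A simple cube tiling code `{s₁, s₁'} × ⋯ × {s_d, s_d'}`. -/
def SimpleCubeTiling (c : S → S) (U : Finset (Fin d → S)) : Prop :=
  ∃ s : Fin d → S, ∀ v : Fin d → S, v ∈ U ↔ ∀ i, v i = s i ∨ v i = c (s i)

/-- Word whose first four coordinates are `x0 x1 x2 x3` and which agrees with
`r` elsewhere. -/
def specialWord (r : Fin d → S) (x0 x1 x2 x3 : S) : Fin d → S := fun i =>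
  if (i : ℕ) = 0 then x0 else if (i : ℕ) = 1 then x1 else if (i : ℕ) = 2 then x2
  else if (i : ℕ) = 3 then x3 else r i

/-- The special pair of 12-word codes (Theorem 1 of the paper). -/
def SpecialPair (c : S → S) (V W : Finset (Fin d → S)) : Prop :=
  ∃ (a b : S) (r : Fin d → S), a ≠ b ∧ a ≠ c b ∧
    V = {specialWord r a (c a) b (c b), specialWord r a b (c b) a,
         specialWord r a (c b) (c b) (c b), specialWord r (c a) a (c b) (c b),
         specialWord r (c a) (c a) a (c b), specialWord r (c a) b (c b) b,
         specialWord r b a b (c b), specialWord r b b b b,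
         specialWord r b (c b) (c a) b, specialWord r (c b) a b (c a),
         specialWord r (c b) (c a) b b, specialWord r (c b) (c b) (c b) b} ∧
    W = {specialWord r (c a) (c a) (c a) b, specialWord r (c a) b a (c a),
         specialWord r b a (c a) a, specialWord r a (c a) (c a) a,
         specialWord r (c a) a (c a) (c a), specialWord r a b b (c a),
         specialWord r b b a a, specialWord r a (c b) (c a) (c a),
         specialWord r (c b) a (c b) a, specialWord r (c b) (c a) a a,
         specialWord r (c b) (c b) a (c a), specialWord r b (c b) a (c b)}

/-- An isomorphism of `S^d`: a permutation of coordinates followed by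
position bijections commuting with complementation. -/
def IsIso (c : S → S) (Φ : (Fin d → S) → Fin d → S) : Prop :=
  ∃ (σ : Equiv.Perm (Fin d)) (h : Fin d → S → S),
    (∀ i, Function.Bijective (h i)) ∧ (∀ i s, h i (c s) = c (h i s)) ∧
    ∀ v i, Φ v i = h i (v (σ i))

/-- The pair `(V, W)` is, up to isomorphism, the special pair. -/
def SpecialPairUpToIso (c : S → S) (V W : Finset (Fin d → S)) : Prop :=
  ∃ Φ, IsIso c Φ ∧
    (SpecialPair c (V.image Φ) (W.image Φ) ∨ SpecialPair c (W.image Φ) (V.image Φ))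



/-! ### A verified search procedure

Symbolic letters are natural numbers: `2 * k` is the `k`-th known class of a coordinate,
`2 * k + 1` its complement.  Symbolic words are lists of five letters. -/

/-- Complement of a symbolic letter. -/
def comp (b : ℕ) : ℕ := b + 1 - 2 * (b % 2)

/-- Forced evaluation of a number. -/
def forceN (n : ℕ) (k : ℕ → Bool) : Bool :=
  match n with
  | 0 => k 0
  | m + 1 => k (Nat.succ m)

/-- Forced evaluation of a list of numbers. -/
def forceL : List ℕ → (List ℕ → Bool) → Bool
  | [], k => k []
  | a :: l, k => forceN a fun a' => forceL l fun ls => k (a' :: ls)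

/-- Forced evaluation of a list of lists. -/
def forceLL : List (List ℕ) → (List (List ℕ) → Bool) → Bool
  | [], k => k []
  | a :: l, k => forceL a fun a' => forceLL l fun ls => k (a' :: ls)

def memb (a : ℕ) : List ℕ → Bool
  | [] => false
  | b :: l => cond (Nat.beq a b) true (memb a l)

/-- The letters available in a coordinate with `K` known classes at a point with sign bits `m`. -/
def opts : ℕ → ℕ → ℕ → List ℕ
  | 0, _, k => [2 * k]
  | n + 1, m, k => (2 * k + m % 2) :: opts n (m / 2) (k + 1)

def optsAll : List ℕ → ℕ → List (List ℕ)
  | [], _ => []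
  | K :: Ks, p => opts K p 0 :: optsAll Ks (p / 32)

/-- For a known word: the available letters (shifted by one) which make a new word dichotomous. -/
def hit : List ℕ → List (List ℕ) → List ℕ
  | z :: zs, o :: os => cond (memb (comp z) o) (comp z + 1) 0 :: hit zs os
  | _, _ => []

def hits : List (List ℕ) → List (List ℕ) → List (List ℕ)
  | [], _ => []
  | z :: zs, os => hit z os :: hits zs os

def dead : List ℕ → Bool
  | [] => true
  | h :: hs => cond (Nat.beq h 0) (dead hs) false

def anyDead : List (List ℕ) → Bool
  | [] => false
  | h :: hs => cond (dead h) true (anyDead hs)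

def stepR (l : ℕ) : List (List ℕ) → List (List ℕ)
  | [] => []
  | [] :: R => [] :: stepR l R
  | (h :: hs) :: R => cond (Nat.beq h (l + 1)) (stepR l R) (hs :: stepR l R)

/-- All words with letters from the options which are dichotomous to all the given ones. -/
def cands : List (List ℕ) → List (List ℕ) → List (List ℕ)
  | [], R => cond (anyDead R) [] [[]]
  | o :: os, R => cond (anyDead R) []
      (o.flatMap fun l => (cands os (stepR l R)).map fun w => l :: w)

/-- Number of complementary positions. -/
def cntC : List ℕ → List ℕ → ℕ
  | a :: as, b :: bs => cond (Nat.beq a (comp b)) 1 0 + cntC as bs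
  | _, _ => 0

/-- Number of positions with different classes. -/
def cntD : List ℕ → List ℕ → ℕ
  | a :: as, b :: bs => cond (Nat.beq (a / 2) (b / 2)) 0 1 + cntD as bs
  | _, _ => 0

def symU : List ℕ → Bool
  | [] => true
  | a :: as => cond (Nat.beq (a / 2) 0) (symU as) false

def bad (t : ℕ) (w z : List ℕ) : Bool :=
  Nat.beq (cntC w z) 1 && (!(symU w && symU z) &&
    (Nat.beq (cntD w z) 0 || ((symU w || symU z) && Nat.ble (cntD w z + 1) t)))

def okWord (t : ℕ) (w : List ℕ) : List (List ℕ) → Bool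
  | [] => true
  | z :: zs => cond (bad t w z) false (okWord t w zs)

def newK : List ℕ → List ℕ → List ℕ
  | K :: Ks, l :: w => cond (Nat.beq l (2 * K)) (K + 1) K :: newK Ks w
  | _, _ => []

/-- Search trees: `c p sub rest` refutes the first pending word by branching at the point `p`. -/
inductive Cert : Type
  | n : Cert
  | c : ℕ → Cert → Cert → Cert

/-- The verified search. -/
def run (t : ℕ) : Cert → List ℕ → List (List ℕ) → List (List ℕ) → Bool
  | Cert.n, _, _, ws => match ws with
    | [] => true
    | _ :: _ => false
  | Cert.c p sub rest, Ks, Z, ws => match ws with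
    | [] => true
    | w :: ws' =>
      cond (forceL w fun w => forceL (newK Ks w) fun Ks' =>
        forceLL (optsAll Ks' p) fun os => forceLL (hits (w :: Z) os) fun R =>
          cond (anyDead R) false
            (run t sub Ks' (w :: Z) ((cands os R).filter fun v => okWord t v (w :: Z))))
        (run t rest Ks Z ws') false

section
open Cert

set_option maxRecDepth 100000

/-- Search tree number 1. -/
def tree1 : Cert :=
  (c 65 (c 2097217 (c 2162753 (c 2164801 n n) (c 2099265 (c 2164801 n n) (c 2099265 (c 2162753 n
  (c 2162753 n n)) n))) (c 65601 (c 2162753 (c 2164801 n n) (c 67649 (c 2164801 n n) (c 67649 (c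
  2162753 n (c 2162753 n n)) n))) (c 65601 (c 2097217 (c 2099265 n n) (c 2097217 (c 2099265 n n)
  (c 67649 (c 2097217 (c 2099265 (c 1089 (c 1057 (c 1058 n n) (c 1153 (c 1154 n n) (c 1057 (c 1026
  n (c 1026 n n)) (c 1090 (c 1058 n (c 1154 n n)) (c 1153 (c 1026 n (c 1026 n n)) n))))) (c
  2230337 n n)) (c 2101313 n n)) (c 4261953 n n)) (c 67649 (c 2099265 (c 2097217 (c 1089 (c 1057
  (c 1058 n n) (c 1153 (c 1154 n n) (c 1057 (c 1026 n (c 1026 n n)) (c 1090 (c 1058 n (c 1154 n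
  n)) (c 1153 (c 1026 n (c 1026 n n)) n))))) (c 2228289 n n)) (c 2101313 n n)) (c 4261953 n n)) (c
  2097217 (c 2099265 (c 4259905 n (c 2230337 n n)) (c 2101313 n n)) n))))) (c 2113 (c 2099265 (c
  2164801 n n) (c 67649 (c 2164801 n n) (c 67649 (c 2099265 n (c 2099265 n n)) n))) (c 2113 (c
  2097217 (c 2162753 n n) (c 2097217 (c 2162753 n n) (c 67649 (c 2097217 (c 2162753 (c 32833 (c
  32801 (c 32802 n n) (c 32897 (c 32898 n n) (c 32801 (c 32770 n (c 32770 n n)) (c 32834 (c 32802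
  n (c 32898 n n)) (c 32897 (c 32770 n (c 32770 n n)) n))))) (c 2166849 n n)) (c 2164801 n n)) (c
  4261953 n n)) (c 67649 (c 2099265 (c 2162753 (c 32833 (c 32801 (c 32802 n n) (c 32897 (c 32898 n
  n) (c 32801 (c 32770 n (c 32770 n n)) (c 32834 (c 32802 n (c 32898 n n)) (c 32897 (c 32770 n (c
  32770 n n)) n))))) n) (c 2101313 n n)) (c 4261953 n n)) (c 2097217 (c 2162753 (c 4196417 n (c
  2166849 n n)) (c 2228289 n n)) n))))) (c 2113 (c 65601 (c 2162753 n n) (c 65601 (c 2099265 (c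
  2162753 (c 34881 (c 34849 (c 34850 n n) (c 34945 (c 34946 n n) (c 34849 (c 34818 n (c 34818 n
  n)) (c 34882 (c 34850 n (c 34946 n n)) (c 34945 (c 34818 n (c 34818 n n)) n))))) (c 2166849 n
  n)) (c 2162753 n n)) (c 4259905 n n)) (c 2099265 (c 67649 (c 2162753 (c 66625 (c 66593 (c 66594
  n n) (c 66689 (c 66690 n n) (c 66593 (c 66562 n (c 66562 n n)) (c 66626 (c 66594 n (c 66690 n
  n)) (c 66689 (c 66562 n (c 66562 n n)) n))))) n) (c 69697 n n)) (c 2230337 n n)) (c 65601 (c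
  2162753 n n) (c 65601 (c 133185 (c 2099265 n (c 2099265 n n)) (c 4259905 n n)) n))))) (c 2113 (c
  65601 (c 2097217 n (c 2097217 n n)) (c 65601 (c 2097217 (c 2164801 (c 34881 (c 34849 (c 34850 n
  n) (c 34945 (c 34946 n n) (c 34849 (c 34818 n (c 34818 n n)) (c 34882 (c 34850 n (c 34946 n n))
  (c 34945 (c 34818 n (c 34818 n n)) n))))) n) (c 2101313 n n)) (c 4259905 n n)) (c 2097217 (c
  65601 n (c 65601 n n)) (c 2097217 (c 65601 (c 2164801 (c 66625 (c 66593 (c 66594 n n) (c 66689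
  (c 66690 n n) (c 66593 (c 66562 n (c 66562 n n)) (c 66626 (c 66594 n (c 66690 n n)) (c 66689 (c
  66562 n (c 66562 n n)) n))))) n) (c 69697 n n)) (c 2228289 n n)) (c 2097217 (c 65601 (c 4196417
  n (c 69697 n n)) (c 2228289 n n)) (c 65601 (c 2097217 n (c 2097217 n n)) (c 65601 (c 133185 (c
  2097217 n (c 2097217 n n)) (c 4259905 n n)) (c 65601 (c 2097217 n (c 2097217 n (c 2097217 n n)))
  n)))))))) n))))))) n)

theorem run1 : run 1 tree1 [1, 1, 1, 1, 1] [[0, 0, 0, 0, 0]]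
    [[1, 2, 0, 0, 0]] = true := by
  decide +kernel

/-- Search tree number 2. -/
def tree2 : Cert :=
  (c 32 (c 1024 (c 1056 (c 65 (c 1089 (c 2097217 (c 2162753 n n) (c 66625 (c 2097217 (c 2162753 (c
  2164801 (c 2164769 n (c 2164865 n n)) (c 2166849 n n)) (c 2163777 n n)) (c 4260929 n n)) (c
  66625 (c 2098241 (c 2162753 (c 2099265 (c 2099233 n (c 2099329 n n)) n) (c 2101313 n n)) (c
  4260929 n n)) (c 2097217 (c 2162753 (c 4195393 n (c 2166849 n n)) (c 2228289 n n)) n)))) (c 1089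
  (c 65601 (c 2098241 (c 2162753 (c 2164801 (c 2164769 n (c 2164865 n n)) (c 2166849 n n)) (c
  2162753 n n)) (c 4259905 n n)) (c 2098241 (c 66625 (c 2162753 (c 67649 (c 67617 n (c 67713 n n))
  n) (c 69697 n n)) (c 2229313 n n)) (c 65601 (c 2162753 n n) (c 65601 (c 132161 (c 2098241 n (c
  2098241 n n)) (c 4259905 n n)) n)))) (c 1089 (c 65601 (c 2097217 (c 2163777 (c 2099265 (c
  2099233 n (c 2099329 n n)) n) (c 2101313 n n)) (c 4259905 n n)) (c 2097217 (c 65601 n (c 65601 n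
  n)) (c 2097217 (c 65601 (c 2163777 (c 67649 (c 67617 n (c 67713 n n)) n) (c 69697 n n)) (c
  2228289 n n)) (c 2097217 (c 65601 (c 4195393 n (c 69697 n n)) (c 2228289 n n)) (c 65601 (c
  2097217 n (c 2097217 n n)) (c 65601 (c 132161 (c 2097217 n (c 2097217 n n)) (c 4259905 n n)) (c
  65601 (c 2097217 n (c 2097217 n (c 2097217 n n))) n))))))) (c 2097217 (c 2098241 (c 2163777 n n)
  (c 2098241 (c 2162753 n (c 2162753 n n)) (c 2162753 (c 2163777 n (c 2166849 n n)) (c 2101313 (c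
  2166849 n n) (c 2101313 (c 2162753 n (c 2162753 n n)) n))))) (c 65601 (c 66625 (c 2163777 n n)
  (c 66625 (c 2162753 n (c 2162753 n n)) (c 2162753 (c 2163777 n (c 2166849 n n)) (c 69697 (c
  2166849 n n) (c 69697 (c 2162753 n (c 2162753 n n)) n))))) (c 65601 (c 66625 (c 2097217 (c 2113
  (c 2081 n (c 2177 n n)) (c 2101313 n n)) (c 4260929 n n)) (c 66625 (c 2098241 (c 2113 (c 2081 n
  (c 2177 n n)) (c 2101313 n n)) (c 4260929 n n)) (c 2097217 (c 2113 (c 2081 n (c 2177 n n)) (c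
  2101313 n n)) (c 2097217 (c 2098241 n (c 2101313 n n)) (c 2097217 (c 2098241 n (c 2101313 n n))
  (c 69697 (c 2166849 (c 2097217 (c 2113 (c 2081 n (c 2177 n n)) n) (c 2232385 n n)) (c 4264001 n
  n)) (c 69697 (c 2162753 (c 2101313 (c 2113 (c 2081 n (c 2177 n n)) n) (c 2228289 n n)) (c
  4264001 n n)) (c 69697 (c 4259905 n (c 4259905 n (c 4259905 n n))) n)))))))) (c 2049 (c 2099201
  (c 2164737 n n) (c 67585 (c 2164737 n n) (c 67585 (c 2099201 n (c 2099201 n n)) n))) (c 2049 (c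
  1048577 (c 1114113 (c 1114114 n n) (c 1048578 (c 1114114 n n) (c 1048578 (c 1114112 n (c 1114112
  n n)) n))) (c 4196353 (c 4261889 n n) (c 67585 (c 2164737 (c 2164769 n (c 2164865 n n)) (c
  4261889 n n)) (c 67585 (c 2099201 (c 2099233 n (c 2099329 n n)) (c 4261889 n n)) (c 4196353 (c
  67585 n (c 67585 n n)) n))))) (c 2049 (c 2099201 (c 2164737 (c 2164769 n (c 2164865 n n)) (c
  2230273 n n)) (c 32769 (c 2129921 (c 2129922 n n) (c 32770 (c 2129922 n n) (c 32770 (c 2129920 n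
  (c 2129920 n n)) n))) (c 2099201 (c 67585 (c 67617 n (c 67713 n n)) (c 2230273 n n)) (c 133121
  (c 2230273 n n) (c 133121 (c 2099201 n (c 2099201 n n)) n))))) (c 2049 (c 1048577 (c 1083393 (c
  2099201 (c 2099233 n (c 2099329 n n)) (c 32769 (c 32770 n n) (c 1083394 (c 32771 (c 2099201 (c
  2099233 n (c 2099329 n n)) (c 32772 n n)) (c 4229122 n n)) (c 32769 (c 1083394 (c 2099201 (c
  2099233 n (c 2099329 n n)) (c 32770 n n)) (c 32772 n n)) (c 32769 (c 2099201 (c 2099233 n (c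
  2099329 n n)) (c 32772 n n)) n))))) (c 1179649 (c 1179650 n n) (c 1048578 (c 1114114 (c 1114146
  n (c 1114242 n n)) (c 1179650 n n)) (c 1048578 (c 1114112 (c 1114144 n (c 1114240 n n)) (c
  1179650 n n)) (c 1179649 (c 1048578 n (c 1048578 n n)) n))))) (c 4196353 (c 4261889 (c 4261921 n
  (c 4262017 n n)) (c 4327425 n n)) (c 32769 (c 1083393 (c 67585 (c 67617 n (c 67713 n n)) (c
  1048577 (c 1048578 n n) (c 67585 (c 67617 n (c 67713 n n)) (c 1048577 (c 1083394 (c 67585 (c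
  67617 n (c 67713 n n)) (c 1048578 n n)) (c 1048580 n n)) (c 67585 (c 67617 n (c 67713 n n))
  n))))) (c 4227073 (c 4227074 n n) (c 32770 (c 2129922 (c 2129954 n (c 2130050 n n)) (c 4227074 n
  n)) (c 32770 (c 2129920 (c 2129952 n (c 2130048 n n)) (c 4227074 n n)) (c 4227073 (c 32770 n (c
  32770 n n)) n))))) (c 32769 (c 1048577 (c 1048578 n n) (c 1048577 (c 1048578 n n) (c 32770 (c
  1048579 (c 1048576 (c 4161 (c 65601 (c 2097217 n (c 2097217 n n)) (c 65601 (c 67585 (c 2129922 n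
  (c 1114112 n n)) (c 4259905 n n)) (c 2097217 (c 65601 n (c 65601 n n)) (c 2097217 (c 2099201 (c
  1114112 n (c 1114112 n n)) (c 2228289 n n)) (c 2097217 (c 2099201 (c 1114112 n (c 1114112 n n))
  (c 2228289 n n)) (c 65601 (c 2097217 n (c 2097217 n n)) (c 65601 (c 67585 (c 2129922 n (c
  1114112 n n)) (c 4259905 n n)) (c 65601 (c 2097217 n (c 2097217 n (c 2097217 n n))) n)))))))) (c
  1179648 n n)) (c 1048580 n n)) (c 4227074 n n)) (c 32770 (c 1048577 (c 1048578 (c 4161 (c 65601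
  (c 2097217 n (c 2097217 n n)) (c 65601 (c 67585 (c 2129920 n (c 1114114 n n)) (c 4259905 n n))
  (c 2097217 (c 65601 n (c 65601 n n)) (c 2097217 (c 2099201 (c 1114114 n (c 1114114 n n)) (c
  2228289 n n)) (c 2097217 (c 2099201 (c 1114114 n (c 1114114 n n)) (c 2228289 n n)) (c 65601 (c
  2097217 n (c 2097217 n n)) (c 65601 (c 67585 (c 2129920 n (c 1114114 n n)) (c 4259905 n n)) (c
  65601 (c 2097217 n (c 2097217 n (c 2097217 n n))) n)))))))) (c 1179650 n n)) (c 1048580 n n)) (c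
  4227074 n n)) (c 1048577 (c 1048578 (c 4227072 n (c 1179650 n n)) (c 1048580 n n)) n))))) (c
  4196353 (c 67585 (c 67617 n (c 67713 n n)) (c 4327425 n n)) (c 133121 (c 2230273 (c 2230305 n (c
  2230401 n n)) (c 4327425 n n)) (c 133121 (c 2099201 (c 2099233 n (c 2099329 n n)) (c 4327425 n
  n)) (c 133121 (c 4196353 n (c 4196353 n (c 4196353 n n))) n)))))))) n)))))))))) (c 66592 (c
  2098208 n n) n)) (c 1056 (c 66560 (c 2098176 n n) (c 2098176 (c 2229248 n n) (c 66560 (c 4260864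
  n n) (c 66560 (c 2098176 n (c 2098176 n n)) n)))) (c 2098176 (c 2098208 (c 2163712 n n) (c
  2163712 (c 2163744 n (c 2163840 n n)) (c 2098304 (c 2163840 n n) (c 2098304 (c 2163712 n (c
  2163712 n n)) n)))) (c 66560 (c 66592 (c 2163712 n n) (c 2163712 (c 2163744 n (c 2163840 n n))
  (c 66688 (c 2163840 n n) (c 66688 (c 2163712 n (c 2163712 n n)) n)))) (c 66560 (c 66592 (c
  4260896 n n) (c 66592 (c 4260864 n (c 4260864 n n)) (c 2098176 (c 2098208 n (c 2098304 n n)) (c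
  2098176 (c 2098208 n (c 2098304 n n)) (c 66688 (c 2163840 (c 1088 (c 1090 n n) (c 2229376 n n))
  (c 4260992 n n)) (c 66688 (c 2163712 (c 1088 (c 1090 n n) (c 2229248 n n)) (c 4260992 n n)) (c
  66688 (c 4260864 n (c 4260864 n (c 4260864 n n))) n))))))) (c 1152 (c 2098176 (c 2163712 n n) (c
  66688 (c 2098176 (c 2163712 (c 2163744 n (c 2163776 (c 2163778 n n) (c 2163968 n n))) (c 2163840
  n n)) (c 4260992 n n)) (c 66688 (c 2163712 (c 2098176 (c 2098208 n (c 2098240 (c 2098242 n n) (c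
  2098432 n n))) (c 2098304 n n)) (c 4260992 n n)) (c 2098176 (c 4195456 (c 66688 n (c 66688 n n))
  (c 2229248 n n)) n)))) (c 1152 (c 66560 (c 2098304 (c 2163712 (c 2163744 n (c 2163776 (c 2163778
  n n) (c 2163968 n n))) (c 2163712 n n)) (c 4260864 n n)) (c 2098304 (c 2163712 (c 66560 (c 66592
  n (c 66624 (c 66626 n n) (c 66816 n n))) (c 66688 n n)) (c 2229376 n n)) (c 66560 (c 2163712 n
  n) (c 66560 (c 132224 (c 2098304 n (c 2098304 n n)) (c 4260864 n n)) n)))) (c 1152 (c 66560 (c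
  2163840 (c 2098176 (c 2098208 n (c 2098240 (c 2098242 n n) (c 2098432 n n))) (c 2098176 n n)) (c
  4260864 n n)) (c 2098176 (c 66560 n (c 66560 n n)) (c 2098176 (c 2163840 (c 66560 (c 66592 n (c
  66624 (c 66626 n n) (c 66816 n n))) (c 66560 n n)) (c 2229248 n n)) (c 2098176 (c 4195456 (c
  66560 n (c 66560 n n)) (c 2229248 n n)) (c 66560 (c 2098176 n (c 2098176 n n)) (c 66560 (c
  132224 (c 2098176 n (c 2098176 n n)) (c 4260864 n n)) (c 66560 (c 2098176 n (c 2098176 n (c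
  2098176 n n))) n))))))) n)))))))) (c 65568 (c 2097184 (c 2099232 (c 2099234 n n) (c 2101280 n
  n)) (c 2097184 (c 1056 (c 1088 (c 1090 n n) (c 1152 n n)) (c 2101280 n n)) (c 66560 (c 1056 (c
  4195360 n n) (c 32768 (c 1114112 (c 1081344 (c 67616 (c 1116192 (c 1116194 n n) (c 2163712 (c
  2229248 n n) (c 2163712 (c 2229248 n n) (c 67618 (c 1116194 n (c 4261922 n n)) (c 2163712 (c
  2229248 n n) n))))) n) (c 1114114 (c 1179650 n n) (c 1179648 (c 1048578 n n) n))) (c 32770 (c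
  4227074 n n) (c 1048576 (c 4227072 (c 32770 n n) n) n))) (c 4260864 (c 4326400 n n) (c 132096 (c
  4326400 n n) (c 132096 (c 4195328 n (c 4195328 n n)) n))))) (c 2097184 (c 1056 (c 1088 (c 1090 n
  n) (c 1152 n n)) (c 2101280 n n)) (c 69664 (c 2166816 (c 2097184 (c 1056 (c 1088 (c 1090 n n) (c
  1152 n n)) n) (c 2232352 n n)) (c 4263968 n n)) (c 69664 (c 2162720 (c 2101280 (c 1056 (c 1088
  (c 1090 n n) (c 1152 n n)) n) (c 2228256 n n)) (c 4263968 n n)) (c 69664 (c 4259872 n (c 4259872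
  n (c 4259872 n n))) n))))))) (c 1024 (c 2097184 (c 2098208 (c 2162720 n n) (c 2162720 (c 2163744
  n (c 2166816 n n)) (c 2101280 (c 2166816 n n) (c 2101280 (c 2162720 n (c 2162720 n n)) n)))) (c
  66560 (c 4260864 n n) (c 4195328 (c 66560 n n) n))) (c 1024 (c 65568 (c 66592 (c 2162720 n n) (c
  2162720 (c 2163744 n (c 2166816 n n)) (c 69664 (c 2166816 n n) (c 69664 (c 2162720 n (c 2162720
  n n)) n)))) (c 2098176 (c 2229248 n n) (c 132096 (c 2098176 n n) n))) (c 1024 (c 65568 (c 66592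
  (c 4260896 n n) (c 66592 (c 4259872 n (c 4259872 n n)) (c 2097184 (c 2098208 n (c 2101280 n n))
  (c 2097184 (c 2098208 n (c 2101280 n n)) (c 69664 (c 2166816 (c 2080 (c 2082 n n) (c 2232352 n
  n)) (c 4263968 n n)) (c 69664 (c 2162720 (c 2080 (c 2082 n n) (c 2228256 n n)) (c 4263968 n n))
  (c 69664 (c 4259872 n (c 4259872 n (c 4259872 n n))) n))))))) (c 32768 (c 1048576 (c 1081344 (c
  65568 (c 2080 (c 1050656 (c 1050658 n n) (c 2098176 (c 2229248 n n) (c 2098176 (c 2229248 n n)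
  (c 2082 (c 1050658 n (c 4196386 n n)) (c 2098176 (c 2229248 n n) n))))) (c 2097184 (c 2080 (c
  2082 n n) (c 2101280 n n)) (c 66560 (c 4260864 n n) (c 66560 (c 2097184 (c 2098176 (c 2098240 (c
  2098242 n n) (c 2098304 n n)) (c 2098176 n n)) (c 8455168 n n)) (c 66560 (c 4260864 n n) (c
  66560 (c 4260864 n n) (c 66560 (c 2098176 (c 2080 (c 2082 n n) (c 2098304 n n)) (c 8455168 n n))
  n))))))) n) (c 1048578 (c 1179650 n n) (c 1179648 (c 1048578 n n) n))) (c 32770 (c 4227074 n n)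
  (c 1048576 (c 4227072 (c 32770 n n) n) n))) (c 4195328 (c 4326400 n n) (c 132096 (c 4326400 n n)
  (c 132096 (c 4195328 n (c 4195328 n n)) n))))) (c 1024 (c 4128 (c 2097184 (c 2162720 n n) (c
  69664 (c 2097184 (c 2162720 (c 2163744 n (c 2164768 (c 2164770 n n) (c 2170912 n n))) (c 2166816
  n n)) (c 4263968 n n)) (c 69664 (c 2162720 (c 2097184 (c 2098208 n (c 2099232 (c 2099234 n n) (c
  2105376 n n))) (c 2101280 n n)) (c 4263968 n n)) (c 2097184 (c 4198432 (c 69664 n (c 69664 n n))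
  (c 2228256 n n)) n)))) (c 66560 (c 4260864 n n) (c 4195328 (c 66560 n n) n))) (c 1024 (c 4128 (c
  65568 (c 2101280 (c 2162720 (c 2163744 n (c 2164768 (c 2164770 n n) (c 2170912 n n))) (c 2162720
  n n)) (c 4259872 n n)) (c 2101280 (c 2162720 (c 65568 (c 66592 n (c 67616 (c 67618 n n) (c 73760
  n n))) (c 69664 n n)) (c 2232352 n n)) (c 65568 (c 2162720 n n) (c 65568 (c 135200 (c 2101280 n
  (c 2101280 n n)) (c 4259872 n n)) n)))) (c 2098176 (c 2229248 n n) (c 132096 (c 2098176 n n)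
  n))) (c 1024 (c 4128 (c 65568 (c 2166816 (c 2097184 (c 2098208 n (c 2099232 (c 2099234 n n) (c
  2105376 n n))) (c 2097184 n n)) (c 4259872 n n)) (c 2097184 (c 65568 n (c 65568 n n)) (c 2097184
  (c 2166816 (c 65568 (c 66592 n (c 67616 (c 67618 n n) (c 73760 n n))) (c 65568 n n)) (c 2228256
  n n)) (c 2097184 (c 4198432 (c 65568 n (c 65568 n n)) (c 2228256 n n)) (c 65568 (c 2097184 n (c
  2097184 n n)) (c 65568 (c 135200 (c 2097184 n (c 2097184 n n)) (c 4259872 n n)) (c 65568 (c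
  2097184 n (c 2097184 n (c 2097184 n n))) n))))))) (c 32768 (c 1048576 (c 1081344 (c 4128 (c
  66560 (c 4260864 n n) (c 2098176 (c 66560 n n) (c 2098176 (c 2229248 n n) (c 2098176 (c 2229248
  n n) (c 66560 (c 2098176 n n) (c 66560 (c 4260864 n n) (c 66560 (c 2098176 n (c 2098176 n n))
  n))))))) n) (c 1048578 (c 1179650 n n) (c 1179648 (c 1048578 n n) n))) (c 32770 (c 4227074 n n)
  (c 1048576 (c 4227072 (c 32770 n n) n) n))) (c 4195328 (c 4326400 n n) (c 132096 (c 4326400 n n)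
  (c 132096 (c 4195328 n (c 4195328 n n)) n))))) n)))))))) n)

theorem run2 : run 2 tree2 [1, 1, 1, 1, 1] [[0, 0, 0, 0, 0]]
    [[1, 2, 2, 0, 0]] = true := by
  decide +kernel

/-- Search tree number 3. -/
def tree3 : Cert :=
  (c 32 (c 1024 (c 1056 (c 32768 (c 32800 (c 33792 (c 33824 (c 65 (c 1089 (c 2097217 (c 2228289 n
  n) (c 132161 (c 4326465 n n) (c 132161 (c 4195393 n (c 4195393 n n)) n))) (c 1089 (c 131137 (c
  4325441 n n) (c 131137 (c 2097217 n (c 2097217 n n)) (c 2097217 (c 2162753 (c 2162817 n n) (c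
  2359361 n n)) (c 131137 (c 4325441 n n) (c 131137 (c 2097217 n (c 2097217 n n)) n))))) (c 32833
  (c 2097217 (c 2101313 n n) (c 36929 (c 4231233 n n) (c 36929 (c 4227137 n (c 4227137 n n)) n)))
  (c 2097217 (c 2098241 (c 2229313 n n) (c 2098241 (c 2228289 n (c 2228289 n n)) (c 2129985 (c
  2134081 n n) (c 2228289 (c 2229313 n (c 2232385 n n)) (c 2101313 (c 2129985 n (c 2129985 n n))
  (c 2101313 (c 2134081 n (c 2232385 n n)) (c 2101313 (c 2134081 n (c 2228289 n (c 2228289 n n)))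
  n))))))) (c 65537 (c 66561 (c 2162689 n n) (c 2162689 (c 2163713 n (c 2166785 n n)) (c 69633 (c
  2166785 n n) (c 69633 (c 2162689 n (c 2162689 n n)) n)))) (c 65537 (c 66561 (c 4260865 n n) (c
  66561 (c 4259841 n (c 4259841 n n)) (c 1048577 (c 1049601 (c 1048576 n n) (c 1052673 (c 1052674
  n n) (c 1048578 (c 1049600 n (c 1049600 n n)) (c 1048578 (c 1049602 n (c 1052674 n n)) (c
  1052673 (c 1048578 n (c 1048578 n n)) n))))) (c 4259841 (c 4260865 n (c 4263937 n n)) (c 69633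
  (c 2166785 (c 2166817 n (c 2166913 n n)) (c 4263937 n n)) (c 69633 (c 2162689 (c 2162721 n (c
  2162817 n n)) (c 4263937 n n)) (c 69633 (c 4259841 n (c 4259841 n (c 4259841 n n))) n))))))) (c
  32833 (c 4161 (c 4198465 n n) (c 4161 (c 2097217 n (c 2097217 n n)) (c 2097217 (c 2099265 (c
  2099329 n n) (c 2105409 n n)) (c 4161 (c 4198465 n n) (c 4161 (c 2097217 n (c 2097217 n n))
  n))))) (c 2049 (c 34817 (c 2099201 n n) (c 2099201 (c 2131969 n (c 2230273 n n)) (c 133121 (c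
  2230273 n n) (c 133121 (c 2099201 n (c 2099201 n n)) n)))) (c 2049 (c 34817 (c 4229121 n n) (c
  34817 (c 4196353 n (c 4196353 n n)) (c 1048577 (c 1081345 (c 1048576 n n) (c 1179649 (c 1179650
  n n) (c 1048578 (c 1081344 n (c 1081344 n n)) (c 1048578 (c 1081346 n (c 1179650 n n)) (c
  1179649 (c 1048578 n (c 1048578 n n)) n))))) (c 4196353 (c 4229121 n (c 4327425 n n)) (c 133121
  (c 2230273 (c 2230305 n (c 2230401 n n)) (c 4327425 n n)) (c 133121 (c 2099201 (c 2099233 n (c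
  2099329 n n)) (c 4327425 n n)) (c 133121 (c 4196353 n (c 4196353 n (c 4196353 n n))) n))))))) (c
  2049 (c 34817 (c 2099201 n n) (c 2099201 (c 2131969 n (c 2162689 (c 2230273 (c 2230305 n (c
  2230401 n n)) (c 67585 n n)) (c 2361345 n n))) (c 65537 (c 2162689 n n) (c 65537 (c 2099201 (c
  2131969 n (c 133121 (c 133153 n (c 133249 n n)) (c 2162689 n n))) (c 4259841 n n)) (c 65537 (c
  2162689 n n) (c 65537 (c 264193 (c 2099201 n (c 2099201 n n)) (c 4259841 n n)) n)))))) (c 2049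
  (c 34817 (c 4229121 n n) (c 34817 (c 4196353 n (c 4196353 n n)) (c 1048577 (c 1081345 (c 1048576
  n n) (c 65537 (c 69633 (c 69761 n n) (c 73729 n n)) (c 1310721 (c 1310722 n n) (c 65537 (c 69633
  (c 69761 n n) (c 73729 n n)) (c 1048578 (c 1081346 n (c 65537 (c 69633 (c 69761 n n) (c 73729 n
  n)) (c 1310722 n n))) (c 65537 (c 69633 (c 69761 n n) (c 73729 n n)) (c 65537 (c 69633 (c 69761
  n n) (c 73729 n n)) n))))))) (c 4196353 (c 4229121 n (c 4327425 (c 4327457 n (c 4327553 n n)) (c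
  4458497 n n))) (c 65537 (c 2162689 (c 2162721 n (c 2162817 n n)) (c 4259841 n n)) (c 65537 (c
  1048577 (c 1048578 n n) (c 4259841 n n)) (c 65537 (c 1048577 (c 1048578 n n) (c 1048577 (c
  1048578 n n) (c 8454145 n n))) (c 65537 (c 264193 (c 1048577 (c 1048578 n n) (c 4458497 n n)) (c
  4259841 n n)) (c 65537 (c 1048577 (c 1048578 n n) (c 4259841 n n)) (c 65537 (c 1048577 (c
  1048578 n n) (c 1048577 (c 1048578 n n) (c 8454145 n n))) n)))))))))) n))))))))))) n) n) n) (c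
  2129920 (c 2134016 (c 2134144 n n) (c 2130048 (c 2134144 n n) (c 2130048 (c 2134016 n (c 2134016
  n n)) n))) (c 36864 (c 2129920 (c 2130048 n n) (c 36992 (c 4231296 n n) (c 36992 (c 4231168 n (c
  4231168 n n)) n))) (c 32896 (c 2129920 (c 2134016 n n) (c 36992 (c 4231296 n n) (c 36992 (c
  4227200 n (c 4227200 n n)) n))) (c 32896 (c 36864 (c 4231168 n n) (c 36864 (c 2129920 n (c
  2129920 n n)) (c 2129920 (c 2131968 (c 2131970 n n) (c 2138112 n n)) (c 36864 (c 4231168 n n) (c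
  36864 (c 2129920 n (c 2129920 n n)) n))))) n))))) n) (c 32768 (c 32800 (c 2098176 (c 2229248 (c
  2229376 n n) (c 2098304 (c 2229376 n n) (c 2098304 (c 2229248 n (c 2229248 n n)) n))) n) n) (c
  32768 (c 32800 (c 132096 (c 2098176 (c 2098304 n n) (c 132224 (c 4326528 n n) (c 132224 (c
  4326400 n (c 4326400 n n)) n))) n) n) (c 32768 (c 32800 (c 1152 (c 2098176 (c 2229248 n n) (c
  132224 (c 4326528 n n) (c 132224 (c 4195456 n (c 4195456 n n)) n))) n) n) (c 32768 (c 32800 (c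
  1152 (c 132096 (c 4326400 n n) (c 132096 (c 2098176 n (c 2098176 n n)) (c 2098176 (c 2163712 (c
  2163714 n n) (c 2360320 n n)) (c 132096 (c 4326400 n n) (c 132096 (c 2098176 n (c 2098176 n n))
  n))))) n) n) n))))) (c 1024 (c 32768 (c 33792 (c 2097184 (c 2228256 (c 2232352 n n) (c 2101280
  (c 2232352 n n) (c 2101280 (c 2228256 n (c 2228256 n n)) n))) n) n) n) (c 1024 (c 32768 (c 33792
  (c 131104 (c 2097184 (c 2101280 n n) (c 135200 (c 4329504 n n) (c 135200 (c 4325408 n (c 4325408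
  n n)) n))) n) n) n) (c 1024 (c 32768 (c 33792 (c 4128 (c 2097184 (c 2228256 n n) (c 135200 (c
  4329504 n n) (c 135200 (c 4198432 n (c 4198432 n n)) n))) n) n) n) (c 1024 (c 32768 (c 33792 (c
  4128 (c 131104 (c 4325408 n n) (c 131104 (c 2097184 n (c 2097184 n n)) (c 2097184 (c 2162720 (c
  2162722 n n) (c 2359328 n n)) (c 131104 (c 4325408 n n) (c 131104 (c 2097184 n (c 2097184 n n))
  n))))) n) n) n) n))))) n)

theorem run3 : run 3 tree3 [1, 1, 1, 1, 1] [[0, 0, 0, 0, 0]]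
    [[1, 2, 2, 2, 0]] = true := by
  decide +kernel

/-- Search tree number 4. -/
def tree4 : Cert :=
  (c 32 (c 1024 (c 1056 (c 32768 (c 32800 (c 33792 (c 33824 (c 1048576 (c 1048608 (c 1049600 (c
  1049632 (c 1081344 (c 1081376 (c 1082368 (c 1082400 (c 65 (c 2097153 (c 2228225 (c 2232321 n n)
  (c 2101249 (c 2232321 n n) (c 2101249 (c 2228225 n (c 2228225 n n)) n))) (c 65537 (c 4259841 (c
  4263937 n n) (c 69633 (c 4263937 n n) (c 69633 (c 4259841 n (c 4259841 n n)) n))) (c 65537 (c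
  2097153 (c 2101249 n n) (c 2097153 (c 2101249 n n) (c 69633 (c 4263937 (c 4264065 n n) (c
  8458241 n n)) (c 69633 (c 4259841 (c 4259969 n n) (c 8458241 n n)) (c 2097153 (c 2049 (c 2177 n
  n) (c 2105345 n n)) n))))) (c 2049 (c 4196353 (c 4327425 n n) (c 133121 (c 4327425 n n) (c
  133121 (c 4196353 n (c 4196353 n n)) n))) (c 2049 (c 2097153 (c 2228225 n n) (c 2097153 (c
  2228225 n n) (c 133121 (c 4327425 (c 4327553 n n) (c 8521729 n n)) (c 133121 (c 4196353 (c
  4196481 n n) (c 8521729 n n)) (c 2097153 (c 65537 (c 65665 n n) (c 2359297 n n)) n))))) (c 2049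
  (c 4196353 (c 4327425 (c 4327553 n n) (c 4458497 n n)) (c 65537 (c 4259841 n n) (c 65537 (c
  2097153 (c 2097281 n n) (c 8454145 n n)) (c 65537 (c 4259841 n n) (c 65537 (c 2097153 (c 2097281
  n n) (c 8454145 n n)) n))))) (c 2049 (c 2097153 (c 2228225 (c 2228353 n n) (c 2359297 n n)) (c
  2097153 (c 2228225 (c 2228353 n n) (c 2359297 n n)) (c 65537 (c 4259841 (c 4259969 n n) (c
  8454145 n n)) (c 65537 (c 2097153 n (c 2097153 n n)) (c 2097153 (c 65537 n (c 65537 n n)) (c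
  65537 (c 4259841 (c 4259969 n n) (c 8454145 n n)) (c 65537 (c 2097153 n (c 2097153 n n)) (c
  65537 (c 2097153 n (c 2097153 n (c 2097153 n n))) n)))))))) n))))))) n) n) n) n) n) n) n) n) n)
  n) n) n) n) n) n) n)

theorem run4 : run 4 tree4 [1, 1, 1, 1, 1] [[0, 0, 0, 0, 0]]
    [[1, 2, 2, 2, 2]] = true := by
  decide +kernel

end

/-! ### Soundness of the search -/

theorem forceN_eq (n : ℕ) (k : ℕ → Bool) : forceN n k = k n := by
  cases n <;> rfl

theorem forceL_eq (l : List ℕ) : ∀ k : List ℕ → Bool, forceL l k = k l := by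
  induction l with
  | nil => intro k; rfl
  | cons a l ih => intro k; simp only [forceL, forceN_eq, ih]

theorem forceLL_eq (l : List (List ℕ)) : ∀ k : List (List ℕ) → Bool, forceLL l k = k l := by
  induction l with
  | nil => intro k; rfl
  | cons a l ih => intro k; simp only [forceLL, forceL_eq, ih]

theorem memb_iff (a : ℕ) (l : List ℕ) : memb a l = true ↔ a ∈ l := by
  induction l with
  | nil => simp [memb]
  | cons b l ih =>
    simp only [memb, List.mem_cons, Bool.cond_eq_ite]
    by_cases h : a = b
    · subst h; simp
    · have : Nat.beq a b = false := by
        rw [Bool.eq_false_iff]; intro h'; exact h (Nat.eq_of_beq_eq_true h')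
      simp [this, ih, h]

theorem beq_iff (a b : ℕ) : Nat.beq a b = true ↔ a = b :=
  ⟨Nat.eq_of_beq_eq_true, fun h => by subst h; exact Nat.beq_refl a⟩

theorem cond_beq {α : Type} (a b : ℕ) (x y : α) :
    cond (Nat.beq a b) x y = if a = b then x else y := by
  by_cases h : a = b
  · simp [h]
  · have : Nat.beq a b = false := by
      rw [Bool.eq_false_iff]; intro h'; exact h (Nat.eq_of_beq_eq_true h')
    simp [this, h]

theorem mem_opts_known (n : ℕ) : ∀ m k j : ℕ, j < n →
    2 * (k + j) + (m / 2 ^ j) % 2 ∈ opts n m k := by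
  induction n with
  | zero => intro m k j h; omega
  | succ n ih =>
    intro m k j h
    cases j with
    | zero => simp [opts]
    | succ j =>
      have := ih (m / 2) (k + 1) j (by omega)
      rw [opts, List.mem_cons]
      right
      rw [pow_succ, mul_comm (2 ^ j), ← Nat.div_div_eq_div_mul]
      have e : k + (j + 1) = k + 1 + j := by omega
      rw [e]
      exact this

theorem mem_opts_fresh (n : ℕ) : ∀ m k : ℕ, 2 * (k + n) ∈ opts n m k := by
  induction n with
  | zero => intro m k; simp [opts]
  | succ n ih =>
    intro m k
    have := ih (m / 2) (k + 1)
    rw [opts, List.mem_cons]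
    right
    convert this using 1
    omega

theorem of_mem_opts (n : ℕ) : ∀ m k a : ℕ, a ∈ opts n m k →
    a = 2 * (k + n) ∨ ∃ j < n, a = 2 * (k + j) + (m / 2 ^ j) % 2 := by
  induction n with
  | zero => intro m k a h; left; simpa [opts] using h
  | succ n ih =>
    intro m k a h
    rw [opts, List.mem_cons] at h
    rcases h with h | h
    · right; exact ⟨0, by omega, by simpa using h⟩
    · rcases ih _ _ _ h with h | ⟨j, hj, h⟩
      · left; omega
      · right
        refine ⟨j + 1, by omega, ?_⟩
        rw [pow_succ, mul_comm (2 ^ j), ← Nat.div_div_eq_div_mul, h]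
        omega

/-- `w` uses one of the letters of the hit list. -/
def HitP : List ℕ → List ℕ → Prop
  | a :: as, h :: hs => h = a + 1 ∨ HitP as hs
  | _, _ => False

theorem HitP.not_dead : ∀ {w h : List ℕ}, HitP w h → dead h = false
  | [], [], H => H.elim
  | [], _ :: _, H => H.elim
  | _ :: _, [], H => H.elim
  | a :: as, h :: hs, H => by
    simp only [dead, cond_beq]
    split_ifs with h0
    · rcases H with H | H
      · omega
      · exact HitP.not_dead H
    · rfl

theorem anyDead_of_hit {w : List ℕ} {R : List (List ℕ)} (H : ∀ h ∈ R, HitP w h) :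
    anyDead R = false := by
  induction R with
  | nil => rfl
  | cons h R ih =>
    simp only [anyDead, (H h (by simp)).not_dead, cond_false]
    exact ih fun h' hh => H h' (by simp [hh])

theorem not_dead_of_anyDead {R : List (List ℕ)} (H : anyDead R = false) :
    ∀ h ∈ R, dead h = false := by
  induction R with
  | nil => simp
  | cons h R ih =>
    simp only [anyDead] at H
    cases hd : dead h with
    | true => simp [hd] at H
    | false =>
      simp only [hd, cond_false] at H
      intro h' hh
      rcases List.mem_cons.1 hh with rfl | hh
      · exact hd
      · exact ih H h' hh

theorem hit_stepR {a : ℕ} {w : List ℕ} {R : List (List ℕ)} (H : ∀ h ∈ R, HitP (a :: w) h) :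
    ∀ h ∈ stepR a R, HitP w h := by
  induction R with
  | nil => simp [stepR]
  | cons h R ih =>
    have ih' := ih fun h' hh => H h' (by simp [hh])
    cases h with
    | nil => exact (H [] (by simp)).elim
    | cons x hs =>
      simp only [stepR, cond_beq]
      split_ifs with hx
      · exact ih'
      · intro h' hh
        rcases List.mem_cons.1 hh with rfl | hh
        · rcases H (x :: h') (by simp) with h1 | h1
          · exact absurd h1 hx
          · exact h1
        · exact ih' h' hh

theorem mem_cands : ∀ (os : List (List ℕ)) (R : List (List ℕ)) (w : List ℕ),
    List.Forall₂ (fun a o => a ∈ o) w os → (∀ h ∈ R, HitP w h) → w ∈ cands os R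
  | [], R, w, hw, H => by
    cases hw
    simp [cands, anyDead_of_hit H]
  | o :: os, R, w, hw, H => by
    cases hw with
    | cons h1 h2 =>
      rename_i a as
      simp only [cands, anyDead_of_hit H, cond_false, List.mem_flatMap, List.mem_map]
      exact ⟨a, h1, as, mem_cands os _ as h2 (hit_stepR H), rfl⟩

theorem forall₂_ofFn : ∀ {n : ℕ} (l : Fin n → ℕ) (O : Fin n → List ℕ), (∀ i, l i ∈ O i) →
    List.Forall₂ (fun a o => a ∈ o) (List.ofFn l) (List.ofFn O)
  | 0, _, _, _ => by simp
  | n + 1, l, O, h => by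
    rw [List.ofFn_succ, List.ofFn_succ]
    exact List.Forall₂.cons (h 0) (forall₂_ofFn _ _ fun i => h i.succ)

theorem hit_ofFn : ∀ {n : ℕ} (l : Fin n → ℕ) (O : Fin n → List ℕ),
    hit (List.ofFn l) (List.ofFn O) =
      List.ofFn fun i => cond (memb (comp (l i)) (O i)) (comp (l i) + 1) 0
  | 0, _, _ => by simp [hit]
  | n + 1, l, O => by
    rw [List.ofFn_succ, List.ofFn_succ, List.ofFn_succ, hit, hit_ofFn]

theorem dead_ofFn : ∀ {n : ℕ} (h : Fin n → ℕ), dead (List.ofFn h) = false → ∃ i, h i ≠ 0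
  | 0, _, H => by simp [dead] at H
  | n + 1, h, H => by
    rw [List.ofFn_succ, dead, cond_beq] at H
    split_ifs at H with h0
    · obtain ⟨i, hi⟩ := dead_ofFn _ H
      exact ⟨i.succ, hi⟩
    · exact ⟨0, h0⟩

theorem hitP_ofFn : ∀ {n : ℕ} (l h : Fin n → ℕ), (∃ i, h i = l i + 1) →
    HitP (List.ofFn l) (List.ofFn h)
  | 0, _, _, ⟨i, _⟩ => i.elim0
  | n + 1, l, h, ⟨i, hi⟩ => by
    rw [List.ofFn_succ, List.ofFn_succ, HitP]
    induction i using Fin.cases with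
    | zero => exact Or.inl hi
    | succ i => exact Or.inr (hitP_ofFn _ _ ⟨i, hi⟩)

theorem cntC_ofFn : ∀ {n : ℕ} (l m : Fin n → ℕ),
    cntC (List.ofFn l) (List.ofFn m) = ∑ i, if l i = comp (m i) then 1 else 0
  | 0, _, _ => by simp [cntC]
  | n + 1, l, m => by
    rw [List.ofFn_succ, List.ofFn_succ, cntC, cntC_ofFn, Fin.sum_univ_succ, cond_beq]

theorem cntD_ofFn : ∀ {n : ℕ} (l m : Fin n → ℕ),
    cntD (List.ofFn l) (List.ofFn m) = ∑ i, if l i / 2 = m i / 2 then 0 else 1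
  | 0, _, _ => by simp [cntD]
  | n + 1, l, m => by
    rw [List.ofFn_succ, List.ofFn_succ, cntD, cntD_ofFn, Fin.sum_univ_succ, cond_beq]

theorem symU_ofFn : ∀ {n : ℕ} (l : Fin n → ℕ),
    symU (List.ofFn l) = true ↔ ∀ i, l i / 2 = 0
  | 0, _ => by simp [symU]
  | n + 1, l => by
    rw [List.ofFn_succ, symU, cond_beq, Fin.forall_fin_succ, ← symU_ofFn]
    split_ifs with h <;> simp [h]

theorem newK_ofFn : ∀ {n : ℕ} (K l : Fin n → ℕ),
    newK (List.ofFn K) (List.ofFn l) = List.ofFn fun i => if l i = 2 * K i then K i + 1 else K i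
  | 0, _, _ => by simp [newK]
  | n + 1, K, l => by
    rw [List.ofFn_succ, List.ofFn_succ, List.ofFn_succ, newK, newK_ofFn, cond_beq]

theorem optsAll_ofFn : ∀ {n : ℕ} (K : Fin n → ℕ) (p : ℕ),
    optsAll (List.ofFn K) p = List.ofFn fun i => opts (K i) (p / 32 ^ (i : ℕ)) 0
  | 0, _, _ => by simp [optsAll]
  | n + 1, K, p => by
    rw [List.ofFn_succ, List.ofFn_succ, optsAll, optsAll_ofFn]
    simp [Nat.div_div_eq_div_mul, pow_succ, mul_comm]

theorem mem_hits {Z os : List (List ℕ)} {h : List ℕ} : h ∈ hits Z os ↔ ∃ z ∈ Z, h = hit z os := by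
  induction Z with
  | nil => simp [hits]
  | cons z Z ih => simp [hits, ih]

theorem okWord_of {t : ℕ} {w : List ℕ} {Z : List (List ℕ)} (H : ∀ z ∈ Z, bad t w z = false) :
    okWord t w Z = true := by
  induction Z with
  | nil => rfl
  | cons z Z ih =>
    simp only [okWord, H z (by simp), cond_false]
    exact ih fun z' hz => H z' (by simp [hz])

/-- Number of complementary positions. -/
def numC {S : Type} [DecidableEq S] (c : S → S) (v z : Fin 5 → S) : ℕ :=
  ∑ i, if v i = c (z i) then 1 else 0

/-- Number of positions with letters from different classes. -/
def numD {S : Type} [DecidableEq S] (c : S → S) (v z : Fin 5 → S) : ℕ :=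
  ∑ i, if v i = z i ∨ v i = c (z i) then 0 else 1

/-- `v` lies in the simple cube tiling code of `q`. -/
def InU {S : Type} (c : S → S) (q v : Fin 5 → S) : Prop := ∀ i, v i = q i ∨ v i = c (q i)

/-- The properties of the cube tiling used by the search. -/
structure Hyp {S : Type} [DecidableEq S] (c : S → S) (V : Set (Fin 5 → S)) (q : Fin 5 → S)
    (t : ℕ) : Prop where
  code : ∀ v ∈ V, ∀ w ∈ V, v ≠ w → Dich c v w
  cover : ∀ F : Fin 5 → S → Bool, (∀ i s, F i (c s) = !F i s) → ∃ v ∈ V, ∀ i, F i (v i) = true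
  ban : ∀ v ∈ V, ∀ z ∈ V, numC c v z = 1 → ¬ (InU c q v ∧ InU c q z) →
    numD c v z ≠ 0 ∧ (InU c q v ∨ InU c q z → t ≤ numD c v z)

/-- Interpretation of symbolic letters. -/
def itp {S : Type} (c : S → S) (r : ℕ → S) (l : ℕ) : S :=
  if l % 2 = 0 then r (l / 2) else c (r (l / 2))

/-- A realization of a search state. -/
structure Rlz {S : Type} (c : S → S) (V : Set (Fin 5 → S)) (q : Fin 5 → S)
    (Ks : List ℕ) (Z : List (List ℕ)) (K : Fin 5 → ℕ) (ρ : Fin 5 → ℕ → S) : Prop where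
  hK : Ks = List.ofFn K
  dist : ∀ i k l, k < K i → l < K i → k ≠ l → ρ i k ≠ ρ i l ∧ ρ i k ≠ c (ρ i l)
  base : ∀ i, 0 < K i ∧ ρ i 0 = q i
  words : ∀ z ∈ Z, ∃ l : Fin 5 → ℕ, z = List.ofFn l ∧ (∀ i, l i < 2 * K i) ∧
    (fun i => itp c (ρ i) (l i)) ∈ V

section Letters

variable {S : Type} [Fintype S] [DecidableEq S] {c : S → S}

theorem itp_even (c : S → S) (r : ℕ → S) (k : ℕ) : itp c r (2 * k) = r k := by
  have h1 : 2 * k % 2 = 0 := by omega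
  have h2 : 2 * k / 2 = k := by omega
  simp [itp]

theorem itp_odd (c : S → S) (r : ℕ → S) (k : ℕ) : itp c r (2 * k + 1) = c (r k) := by
  have h1 : (2 * k + 1) % 2 = 1 := by omega
  have h2 : (2 * k + 1) / 2 = k := by omega
  simp [itp, h1, h2]

theorem letter_cases (l : ℕ) : ∃ k, l = 2 * k ∨ l = 2 * k + 1 := ⟨l / 2, by omega⟩

theorem itp_comp (hc : ∀ s, c (c s) = s) (r : ℕ → S) (l : ℕ) :
    itp c r (comp l) = c (itp c r l) := by
  obtain ⟨k, rfl | rfl⟩ := letter_cases l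
  · have : comp (2 * k) = 2 * k + 1 := by unfold comp; omega
    rw [this, itp_odd, itp_even]
  · have : comp (2 * k + 1) = 2 * k := by unfold comp; omega
    rw [this, itp_odd, itp_even, hc]

theorem itp_inj (hc : ∀ s, c (c s) = s) (hc' : ∀ s, c s ≠ s) {r : ℕ → S} {K : ℕ}
    (hd : ∀ k l, k < K → l < K → k ≠ l → r k ≠ r l ∧ r k ≠ c (r l)) {a b : ℕ}
    (ha : a < 2 * K) (hb : b < 2 * K) (h : itp c r a = itp c r b) : a = b := by
  obtain ⟨k, hk⟩ := letter_cases a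
  obtain ⟨l, hl⟩ := letter_cases b
  have key : k = l := by
    by_contra hne
    have h1 := hd k l (by omega) (by omega) hne
    have h2 := hd l k (by omega) (by omega) (Ne.symm hne)
    rcases hk with rfl | rfl <;> rcases hl with rfl | rfl <;>
      simp only [itp_even, itp_odd] at h
    · exact h1.1 h
    · exact h1.2 h
    · exact h2.2 h.symm
    · apply h1.1; rw [← hc (r k), h, hc]
  subst key
  rcases hk with rfl | rfl <;> rcases hl with rfl | rfl <;>
    simp only [itp_even, itp_odd] at h ⊢
  · exact absurd h.symm (hc' _)
  · exact absurd h (hc' _)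

theorem comp_lt {b K : ℕ} (hb : b < 2 * K) : comp b < 2 * K := by unfold comp; omega

theorem comp_div (b : ℕ) : comp b / 2 = b / 2 := by unfold comp; omega

theorem div_two_eq {a b : ℕ} : a / 2 = b / 2 ↔ a = b ∨ a = comp b := by unfold comp; omega

theorem exists_orientation (hc : ∀ s, c (c s) = s) (hc' : ∀ s, c s ≠ s) :
    ∃ f : S → Bool, ∀ s, f (c s) = !f s := by
  let e := Fintype.equivFin S
  refine ⟨fun s => decide (e s < e (c s)), fun s => ?_⟩
  have hne : e s ≠ e (c s) := fun h => hc' s (e.injective h).symm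
  simp only [hc]
  rcases lt_or_gt_of_ne hne with h | h
  · simp [h, h.le]
  · simp [h, h.le]

theorem exists_point (hc : ∀ s, c (c s) = s) (hc' : ∀ s, c s ≠ s) {r : ℕ → S} {K : ℕ}
    (hd : ∀ k l, k < K → l < K → k ≠ l → r k ≠ r l ∧ r k ≠ c (r l)) (b : ℕ → ℕ)
    (hb : ∀ k, b k < 2) :
    ∃ f : S → Bool, (∀ s, f (c s) = !f s) ∧ ∀ k < K, f (itp c r (2 * k + b k)) = true := by
  classical
  obtain ⟨g, hg⟩ := exists_orientation hc hc'
  let A : S → Prop := fun s => ∃ k < K, s = itp c r (2 * k + b k)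
  have hA : ∀ s, A s → ¬ A (c s) := by
    rintro s ⟨k, hk, rfl⟩ ⟨l, hl, h⟩
    have h1 := hb k
    have h2 := hb l
    rw [← itp_comp hc] at h
    have := itp_inj hc hc' hd (comp_lt (by omega)) (by omega) h
    unfold comp at this
    have hkl : k = l := by omega
    subst hkl
    omega
  refine ⟨fun s => if A s then true else if A (c s) then false else g s, fun s => ?_, ?_⟩
  · simp only [hc]
    by_cases h1 : A s
    · simp [h1, hA s h1]
    · by_cases h2 : A (c s)
      · simp [h1, h2]
      · simp [h1, h2, hg]
  · intro k hk
    have : A (itp c r (2 * k + b k)) := ⟨k, hk, rfl⟩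
    simp [this]

end Letters

section Core

variable {S : Type} [Fintype S] [DecidableEq S] {c : S → S}

theorem itp_congr {r r' : ℕ → S} {K a : ℕ} (h : ∀ k < K, r' k = r k) (ha : a < 2 * K) :
    itp c r' a = itp c r a := by
  unfold itp
  rw [h (a / 2) (by omega)]

/-- Choice of the symbolic letter of a covering word in one coordinate. -/
theorem letter_step (hc : ∀ s, c (c s) = s) (hc' : ∀ s, c s ≠ s) {r : ℕ → S} {K m : ℕ}
    (hd : ∀ k l, k < K → l < K → k ≠ l → r k ≠ r l ∧ r k ≠ c (r l))
    {f : S → Bool} (hf : ∀ s, f (c s) = !f s)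
    (hf' : ∀ k < K, f (itp c r (2 * k + m / 2 ^ k % 2)) = true) {x : S} (hx : f x = true) :
    ∃ (l K' : ℕ) (r' : ℕ → S), l ∈ opts K m 0 ∧ K' = (if l = 2 * K then K + 1 else K) ∧
      l < 2 * K' ∧ K ≤ K' ∧ (∀ k < K, r' k = r k) ∧ itp c r' l = x ∧
      ∀ k l, k < K' → l < K' → k ≠ l → r' k ≠ r' l ∧ r' k ≠ c (r' l) := by
  by_cases h : ∃ k < K, x = r k ∨ x = c (r k)
  · obtain ⟨k, hk, h⟩ := h
    have hb : m / 2 ^ k % 2 < 2 := Nat.mod_lt _ (by norm_num)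
    have hlt : 2 * k + m / 2 ^ k % 2 < 2 * K := by omega
    refine ⟨2 * k + m / 2 ^ k % 2, K, r, ?_, ?_, hlt, le_rfl, fun _ _ => rfl, ?_, hd⟩
    · simpa using mem_opts_known K m 0 k hk
    · rw [if_neg hlt.ne]
    · have h1 := hf' k hk
      rcases Nat.lt_succ_iff_lt_or_eq.1 hb with h0 | h0
      · have h0 : m / 2 ^ k % 2 = 0 := by omega
        rw [h0, add_zero, itp_even] at h1 ⊢
        rcases h with h | h
        · exact h.symm
        · rw [h, hf, h1] at hx
          simp at hx
      · have h0 : m / 2 ^ k % 2 = 1 := by omega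
        rw [h0, itp_odd] at h1 ⊢
        rcases h with h | h
        · rw [hf, ← h, hx] at h1
          simp at h1
        · exact h.symm
  · push Not at h
    refine ⟨2 * K, K + 1, Function.update r K x, ?_, by simp, by omega, by omega, ?_, ?_, ?_⟩
    · simpa using mem_opts_fresh K m 0
    · intro k hk
      rw [Function.update_of_ne hk.ne]
    · rw [itp_even, Function.update_self]
    · intro k l hk hl hkl
      rcases Nat.lt_succ_iff_lt_or_eq.1 hk with h1 | h1 <;>
        rcases Nat.lt_succ_iff_lt_or_eq.1 hl with h2 | h2
      · rw [Function.update_of_ne h1.ne, Function.update_of_ne h2.ne]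
        exact hd k l h1 h2 hkl
      · subst h2
        rw [Function.update_of_ne h1.ne, Function.update_self]
        refine ⟨fun e => (h k h1).1 e.symm, fun e => (h k h1).2 ?_⟩
        rw [e, hc]
      · subst h1
        rw [Function.update_of_ne h2.ne, Function.update_self]
        exact h l h2
      · omega

theorem core_step (hc : ∀ s, c (c s) = s) (hc' : ∀ s, c s ≠ s) {V : Set (Fin 5 → S)}
    {q : Fin 5 → S} {t : ℕ} (H : Hyp c V q t) {Ks : List ℕ} {Z : List (List ℕ)}
    {K : Fin 5 → ℕ} {ρ : Fin 5 → ℕ → S} (R : Rlz c V q Ks Z K ρ) (p : ℕ)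
    (hdead : anyDead (hits Z (optsAll Ks p)) = false) :
    ∃ w ∈ cands (optsAll Ks p) (hits Z (optsAll Ks p)), okWord t w Z = true ∧
      ∃ K' ρ', Rlz c V q (newK Ks w) (w :: Z) K' ρ' := by
  obtain ⟨rfl, dist, base, words⟩ := R
  have hpt : ∀ i : Fin 5, ∃ f : S → Bool, (∀ s, f (c s) = !f s) ∧
      ∀ k < K i, f (itp c (ρ i) (2 * k + p / 32 ^ (i : ℕ) / 2 ^ k % 2)) = true := fun i =>
    exists_point hc hc' (dist i) (fun k => p / 32 ^ (i : ℕ) / 2 ^ k % 2)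
      (fun k => Nat.mod_lt _ (by norm_num))
  choose f hf hf' using hpt
  obtain ⟨v, hv, hvf⟩ := H.cover f hf
  have hl := fun i => letter_step hc hc' (dist i) (hf i) (hf' i) (hvf i)
  choose l K' ρ' hlo hK' hlK' hKK hρ' hlv dist' using hl
  have hopt := optsAll_ofFn K p
  have hold : ∀ i a, a < 2 * K i → itp c (ρ' i) a = itp c (ρ i) a := fun i a ha =>
    itp_congr (hρ' i) ha
  have hinj : ∀ i a, a < 2 * K i → (l i = a ↔ v i = itp c (ρ i) a) := by
    intro i a ha
    rw [← hold i a ha, ← hlv i]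
    refine ⟨fun h => by rw [h], fun h => ?_⟩
    have := hKK i
    exact itp_inj hc hc' (dist' i) (hlK' i) (by omega) h
  have hkey : ∀ lz : Fin 5 → ℕ, List.ofFn lz ∈ Z → (∀ i, lz i < 2 * K i) →
      (fun i => itp c (ρ i) (lz i)) ∈ V → ∃ j, l j = comp (lz j) := by
    intro lz hz hlt hzV
    have h1 := not_dead_of_anyDead hdead _ (mem_hits.2 ⟨_, hz, rfl⟩)
    rw [hopt, hit_ofFn] at h1
    obtain ⟨j, hj⟩ := dead_ofFn _ h1
    have hm : comp (lz j) ∈ opts (K j) (p / 32 ^ (j : ℕ)) 0 := by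
      rw [← memb_iff]
      by_contra hcon
      rw [Bool.not_eq_true] at hcon
      simp [hcon] at hj
    have hne : v ≠ fun i => itp c (ρ i) (lz i) := by
      intro e
      have ej : v j = itp c (ρ j) (lz j) := congrFun e j
      have hlt' := comp_lt (hlt j)
      rcases of_mem_opts _ _ _ _ hm with h2 | ⟨k, hk, h2⟩
      · omega
      · have h3 := hf' j k hk
        rw [zero_add] at h2
        rw [← h2, itp_comp hc, hf, ← ej, hvf] at h3
        simp at h3
    obtain ⟨i, hi⟩ := H.code v hv _ hzV hne
    refine ⟨i, (hinj i _ (comp_lt (hlt i))).2 ?_⟩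
    rw [itp_comp hc]
    exact hi
  refine ⟨List.ofFn l, ?_, ?_, K', ρ', ?_⟩
  · apply mem_cands
    · rw [hopt]
      exact forall₂_ofFn _ _ hlo
    · intro h hh
      obtain ⟨z, hz, rfl⟩ := mem_hits.1 hh
      obtain ⟨lz, rfl, hlt, hzV⟩ := words z hz
      obtain ⟨j, hj⟩ := hkey lz hz hlt hzV
      rw [hopt, hit_ofFn]
      apply hitP_ofFn
      refine ⟨j, ?_⟩
      rw [← hj, (memb_iff _ _).2 (hlo j), cond_true]
  · apply okWord_of
    intro z hz
    obtain ⟨lz, rfl, hlt, hzV⟩ := words z hz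
    set z' : Fin 5 → S := fun i => itp c (ρ i) (lz i) with hz'
    have hC : cntC (List.ofFn l) (List.ofFn lz) = numC c v z' := by
      rw [cntC_ofFn, numC]
      refine Finset.sum_congr rfl fun i _ => ?_
      have : l i = comp (lz i) ↔ v i = c (z' i) := by
        rw [hinj i _ (comp_lt (hlt i)), itp_comp hc]
      simp only [this]
    have hD : cntD (List.ofFn l) (List.ofFn lz) = numD c v z' := by
      rw [cntD_ofFn, numD]
      refine Finset.sum_congr rfl fun i _ => ?_
      have : l i / 2 = lz i / 2 ↔ (v i = z' i ∨ v i = c (z' i)) := by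
        rw [div_two_eq, hinj i _ (comp_lt (hlt i)), hinj i _ (hlt i), itp_comp hc]
      simp only [this]
    have h0 : ∀ i, itp c (ρ i) 0 = q i := fun i => by
      have := itp_even c (ρ i) 0
      rw [mul_zero] at this
      rw [this, (base i).2]
    have h1 : ∀ i, itp c (ρ i) 1 = c (q i) := fun i => by
      have := itp_odd c (ρ i) 0
      rw [mul_zero, zero_add] at this
      rw [this, (base i).2]
    have hUv : symU (List.ofFn l) = true ↔ InU c q v := by
      rw [symU_ofFn, InU]
      refine forall_congr' fun i => ?_
      have hb := (base i).1
      rw [← h1 i, ← h0 i, ← hinj i 0 (by omega), ← hinj i 1 (by omega)]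
      omega
    have hUz : symU (List.ofFn lz) = true ↔ InU c q z' := by
      rw [symU_ofFn, InU]
      refine forall_congr' fun i => ?_
      have hb := (base i).1
      have e0 : z' i = q i ↔ lz i = 0 := by
        rw [← h0 i]
        exact ⟨fun h => itp_inj hc hc' (dist i) (hlt i) (by omega) h, fun h => by rw [hz']; simp [h]⟩
      have e1 : z' i = c (q i) ↔ lz i = 1 := by
        rw [← h1 i]
        exact ⟨fun h => itp_inj hc hc' (dist i) (hlt i) (by omega) h, fun h => by rw [hz']; simp [h]⟩
      rw [e0, e1]
      omega
    rw [Bool.eq_false_iff]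
    intro hbad
    simp only [bad, Bool.and_eq_true, Bool.or_eq_true, beq_iff, Bool.not_eq_true', hC, hD,
      Nat.ble_eq, hUv, hUz] at hbad
    obtain ⟨b1, b2, b3⟩ := hbad
    have b2' : ¬ (InU c q v ∧ InU c q z') := by
      rw [← hUv, ← hUz, ← Bool.and_eq_true, b2]
      simp
    obtain ⟨c1, c2⟩ := H.ban v hv z' hzV b1 b2'
    rcases b3 with b3 | ⟨b3, b4⟩
    · exact c1 b3
    · have := c2 b3
      omega
  · refine ⟨?_, dist', fun i => ?_, ?_⟩
    · rw [newK_ofFn]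
      congr 1
      funext i
      exact (hK' i).symm
    · have hb := base i
      have := hKK i
      exact ⟨by omega, by rw [hρ' i 0 hb.1, hb.2]⟩
    · intro z hz
      rcases List.mem_cons.1 hz with rfl | hz
      · refine ⟨l, rfl, hlK', ?_⟩
        have : (fun i => itp c (ρ' i) (l i)) = v := funext hlv
        rw [this]
        exact hv
      · obtain ⟨lz, rfl, hlt, hzV⟩ := words z hz
        refine ⟨lz, rfl, fun i => ?_, ?_⟩
        · have := hKK i
          have := hlt i
          omega
        · have : (fun i => itp c (ρ' i) (lz i)) = fun i => itp c (ρ i) (lz i) :=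
            funext fun i => hold i _ (hlt i)
          rw [this]
          exact hzV

theorem run_sound (hc : ∀ s, c (c s) = s) (hc' : ∀ s, c s ≠ s) {V : Set (Fin 5 → S)}
    {q : Fin 5 → S} {t : ℕ} (H : Hyp c V q t) (T : Cert) :
    ∀ (Ks : List ℕ) (Z ws : List (List ℕ)), run t T Ks Z ws = true →
      ∀ w ∈ ws, ∀ K ρ, ¬ Rlz c V q (newK Ks w) (w :: Z) K ρ := by
  induction T with
  | n =>
    intro Ks Z ws h w hw
    cases ws with
    | nil => simp at hw
    | cons a ws => simp [run] at h
  | c p sub rest ih1 ih2 =>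
    intro Ks Z ws h w hw K ρ R
    cases ws with
    | nil => simp at hw
    | cons a ws =>
      simp only [run, forceL_eq, forceLL_eq] at h
      rcases hd : anyDead (hits (a :: Z) (optsAll (newK Ks a) p)) with _ | _
      · rw [hd, cond_false] at h
        rcases hs : run t sub (newK Ks a) (a :: Z)
          ((cands (optsAll (newK Ks a) p) (hits (a :: Z) (optsAll (newK Ks a) p))).filter
            fun v => okWord t v (a :: Z)) with _ | _
        · rw [hs] at h
          simp at h
        · rw [hs, cond_true] at h
          rcases List.mem_cons.1 hw with rfl | hw
          · obtain ⟨v, hv1, hv2, K', ρ', R'⟩ := core_step hc hc' H R p hd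
            exact ih1 _ _ _ hs v (List.mem_filter.2 ⟨hv1, hv2⟩) K' ρ' R'
          · exact ih2 _ _ _ h w hw K ρ R
      · rw [hd] at h
        simp at h

end Core

section Steps

variable {S : Type} [Fintype S] [DecidableEq S] {c : S → S}

theorem InU.trans (hc : ∀ s, c (c s) = s) {q u v : Fin 5 → S} (h1 : InU c q u) (h2 : InU c u v) :
    InU c q v := by
  intro i
  rcases h1 i with a | a <;> rcases h2 i with b | b <;> rw [b, a] <;> simp [hc]

theorem InU.symm (hc : ∀ s, c (c s) = s) {q u : Fin 5 → S} (h1 : InU c q u) : InU c u q := by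
  intro i
  rcases h1 i with a | a <;> rw [a] <;> simp [hc]

theorem numC_symm (hc : ∀ s, c (c s) = s) (u v : Fin 5 → S) : numC c u v = numC c v u := by
  unfold numC
  refine Finset.sum_congr rfl fun i _ => ?_
  have : u i = c (v i) ↔ v i = c (u i) :=
    ⟨fun h => by rw [h, hc], fun h => by rw [h, hc]⟩
  simp only [this]

theorem numD_symm (hc : ∀ s, c (c s) = s) (u v : Fin 5 → S) : numD c u v = numD c v u := by
  unfold numD
  refine Finset.sum_congr rfl fun i _ => ?_
  have h1 : u i = c (v i) ↔ v i = c (u i) :=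
    ⟨fun h => by rw [h, hc], fun h => by rw [h, hc]⟩
  simp only [h1, eq_comm (a := u i) (b := v i)]

theorem Hyp.rebase (hc : ∀ s, c (c s) = s) {V : Set (Fin 5 → S)} {q u : Fin 5 → S} {t : ℕ}
    (H : Hyp c V q t) (hu : InU c q u) : Hyp c V u t := by
  have e : ∀ v, InU c u v ↔ InU c q v := fun v =>
    ⟨fun h => hu.trans hc h, fun h => (hu.symm hc).trans hc h⟩
  refine ⟨H.code, H.cover, ?_⟩
  simp only [e]
  exact H.ban

theorem Hyp.perm {V : Set (Fin 5 → S)} {q : Fin 5 → S} {t : ℕ} (H : Hyp c V q t)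
    (σ : Equiv.Perm (Fin 5)) :
    Hyp c {x | (fun i => x (σ.symm i)) ∈ V} (fun i => q (σ i)) t := by
  have eU : ∀ x, InU c (fun i => q (σ i)) x ↔ InU c q (fun i => x (σ.symm i)) := by
    intro x
    constructor
    · intro h i
      simpa using h (σ.symm i)
    · intro h i
      simpa using h (σ i)
  have eC : ∀ x z : Fin 5 → S,
      numC c (fun i => x (σ.symm i)) (fun i => z (σ.symm i)) = numC c x z := fun x z =>
    Equiv.sum_comp σ.symm fun i => if x i = c (z i) then 1 else 0
  have eD : ∀ x z : Fin 5 → S,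
      numD c (fun i => x (σ.symm i)) (fun i => z (σ.symm i)) = numD c x z := fun x z =>
    Equiv.sum_comp σ.symm fun i => if x i = z i ∨ x i = c (z i) then 0 else 1
  refine ⟨?_, ?_, ?_⟩
  · intro x hx y hy hne
    have hne' : (fun i => x (σ.symm i)) ≠ fun i => y (σ.symm i) := by
      intro e
      apply hne
      funext i
      simpa using congrFun e (σ i)
    obtain ⟨i, hi⟩ := H.code _ hx _ hy hne'
    exact ⟨σ.symm i, hi⟩
  · intro F hF
    obtain ⟨v, hv, h⟩ := H.cover (fun i => F (σ.symm i)) fun i => hF (σ.symm i)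
    refine ⟨fun i => v (σ i), by simpa using hv, fun i => ?_⟩
    simpa using h (σ i)
  · intro x hx z hz h1 h2
    rw [eU, eU] at h2 ⊢
    rw [← eC] at h1
    rw [← eD]
    exact H.ban _ hx _ hz h1 h2

/-- The kind of a position. -/
def kind (c : S → S) (v u : Fin 5 → S) (i : Fin 5) : Fin 3 :=
  if v i = c (u i) then 1 else if v i = u i then 0 else 2

theorem exists_perm {k g : Fin 5 → Fin 3}
    (h1 : (Finset.univ.filter fun i => k i = 1).card = (Finset.univ.filter fun i => g i = 1).card)
    (h2 : (Finset.univ.filter fun i => k i = 2).card = (Finset.univ.filter fun i => g i = 2).card) :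
    ∃ σ : Equiv.Perm (Fin 5), ∀ i, k (σ i) = g i := by
  have tot : ∀ f : Fin 5 → Fin 3, (Finset.univ.filter fun i => f i = 0).card +
      (Finset.univ.filter fun i => f i = 1).card +
      (Finset.univ.filter fun i => f i = 2).card = 5 := by
    intro f
    have := Finset.card_eq_sum_card_fiberwise (f := f) (s := Finset.univ) (t := Finset.univ)
      (fun _ _ => by simp)
    rw [Fin.sum_univ_three] at this
    simpa using this.symm
  have h0 : (Finset.univ.filter fun i => k i = 0).card =
      (Finset.univ.filter fun i => g i = 0).card := by
    have a := tot k
    have b := tot g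
    omega
  have hall : ∀ x : Fin 3, Nonempty ({i // g i = x} ≃ {i // k i = x}) := by
    intro x
    refine ⟨Fintype.equivOfCardEq ?_⟩
    rw [Fintype.card_subtype, Fintype.card_subtype]
    fin_cases x
    · exact h0.symm
    · exact h1.symm
    · exact h2.symm
  let e : ∀ x : Fin 3, {i // g i = x} ≃ {i // k i = x} := fun x => (hall x).some
  exact ⟨Equiv.ofFiberEquiv e, fun i => Equiv.ofFiberEquiv_map e i⟩

theorem no_pair (hc : ∀ s, c (c s) = s) (hc' : ∀ s, c s ≠ s) {V : Set (Fin 5 → S)}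
    {q : Fin 5 → S} {t : ℕ} (H : Hyp c V q t) (T : Cert) (g : Fin 5 → Fin 3)
    (hg1 : (Finset.univ.filter fun i => g i = 1).card = 1)
    (hg2 : (Finset.univ.filter fun i => g i = 2).card = t)
    (hrun : run t T [1, 1, 1, 1, 1] [[0, 0, 0, 0, 0]] [List.ofFn fun i => (g i : ℕ)] = true)
    {u v : Fin 5 → S} (hu : u ∈ V) (hv : v ∈ V) (huq : InU c q u)
    (h1 : numC c v u = 1) (h2 : numD c v u = t) : False := by
  have k1 : (Finset.univ.filter fun i => kind c v u i = 1).card = 1 := by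
    rw [← h1, numC, Finset.card_filter]
    refine Finset.sum_congr rfl fun i _ => ?_
    unfold kind
    split_ifs <;> simp_all
  have k2 : (Finset.univ.filter fun i => kind c v u i = 2).card = t := by
    rw [← h2, numD, Finset.card_filter]
    refine Finset.sum_congr rfl fun i _ => ?_
    unfold kind
    split_ifs <;> simp_all
  obtain ⟨σ, hσ⟩ := exists_perm (k1.trans hg1.symm) (k2.trans hg2.symm)
  have H' := (H.rebase hc huq).perm σ
  refine run_sound hc hc' H' T _ _ _ hrun _ (List.mem_singleton.2 rfl)
    (fun i => if (g i : ℕ) = 2 then 2 else 1)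
    (fun i k => if k = 0 then u (σ i) else v (σ i)) ⟨?_, ?_, ?_, ?_⟩
  · have : [1, 1, 1, 1, 1] = List.ofFn fun _ : Fin 5 => 1 := by simp [List.ofFn_succ]
    rw [this, newK_ofFn]
  · intro i
    have hk : ∀ k l : ℕ, k < 2 → l < 2 → k ≠ l → (g i : ℕ) = 2 →
        (if k = 0 then u (σ i) else v (σ i)) ≠ (if l = 0 then u (σ i) else v (σ i)) ∧
        (if k = 0 then u (σ i) else v (σ i)) ≠ c (if l = 0 then u (σ i) else v (σ i)) := by
      intro k l hk hl hkl hg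
      have hs := hσ i
      have hgi : g i = 2 := Fin.ext hg
      rw [hgi] at hs
      unfold kind at hs
      split_ifs at hs with a b
      · exact absurd hs (by decide)
      · exact absurd hs (by decide)
      · have a' : u (σ i) ≠ c (v (σ i)) := fun e => a (by rw [e, hc])
        have b' : u (σ i) ≠ v (σ i) := fun e => b e.symm
        interval_cases k <;> interval_cases l <;> simp_all
    intro k l hk' hl' hkl
    by_cases hg : (g i : ℕ) = 2
    · simp only [hg, if_true] at hk' hl'
      exact hk k l hk' hl' hkl hg
    · simp only [hg, if_false] at hk' hl'
      omega
  · intro i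
    constructor
    · split_ifs <;> omega
    · simp
  · intro z hz
    simp only [List.mem_cons, List.not_mem_nil, or_false] at hz
    rcases hz with rfl | rfl
    · refine ⟨_, rfl, fun i => ?_, ?_⟩
      · have := (g i).isLt
        split_ifs <;> omega
      · have e : (fun i => itp c (fun k => if k = 0 then u (σ i) else v (σ i)) (g i : ℕ)) =
            fun i => v (σ i) := by
          funext i
          have hs := hσ i
          rw [← hs]
          unfold kind
          split_ifs with a b
          · simp [itp, a]
          · simp [itp, b]
          · simp [itp]
        rw [e]
        simpa using hv
    · refine ⟨fun _ => 0, by simp [List.ofFn_succ], fun i => ?_, ?_⟩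
      · show 0 < _
        split_ifs <;> omega
      · simpa [itp] using hu

theorem Hyp.succ (hc : ∀ s, c (c s) = s) (hc' : ∀ s, c s ≠ s) {V : Set (Fin 5 → S)}
    {q : Fin 5 → S} {t : ℕ} (H : Hyp c V q t) (T : Cert) (g : Fin 5 → Fin 3)
    (hg1 : (Finset.univ.filter fun i => g i = 1).card = 1)
    (hg2 : (Finset.univ.filter fun i => g i = 2).card = t)
    (hrun : run t T [1, 1, 1, 1, 1] [[0, 0, 0, 0, 0]] [List.ofFn fun i => (g i : ℕ)] = true) :
    Hyp c V q (t + 1) := by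
  refine ⟨H.code, H.cover, fun v hv z hz h1 h2 => ?_⟩
  obtain ⟨a, b⟩ := H.ban v hv z hz h1 h2
  refine ⟨a, fun h => ?_⟩
  have hle := b h
  by_contra hcon
  have heq : numD c v z = t := by omega
  rcases h with h | h
  · rw [numC_symm hc] at h1
    rw [numD_symm hc] at heq
    exact no_pair hc hc' H T g hg1 hg2 hrun hv hz h h1 heq
  · exact no_pair hc hc' H T g hg1 hg2 hrun hz hv h h1 heq

theorem hyp_five (hc : ∀ s, c (c s) = s) (hc' : ∀ s, c s ≠ s) {V : Set (Fin 5 → S)}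
    {q : Fin 5 → S} (H : Hyp c V q 1) : Hyp c V q 5 := by
  have H2 := H.succ hc hc' tree1 ![1, 2, 0, 0, 0] (by decide) (by decide) run1
  have H3 := H2.succ hc hc' tree2 ![1, 2, 2, 0, 0] (by decide) (by decide) run2
  have H4 := H3.succ hc hc' tree3 ![1, 2, 2, 2, 0] (by decide) (by decide) run3
  exact H4.succ hc hc' tree4 ![1, 2, 2, 2, 2] (by decide) (by decide) run4

theorem numC_add_numD_le (v z : Fin 5 → S) : numC c v z + numD c v z ≤ 5 := by
  unfold numC numD
  rw [← Finset.sum_add_distrib]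
  refine (Finset.sum_le_card_nsmul _ _ 1 fun i _ => ?_).trans (by simp)
  by_cases h : v i = c (z i)
  · simp [h]
  · rw [if_neg h, zero_add]
    split_ifs <;> omega

theorem coverage (hc' : ∀ s, c s ≠ s) {V : Finset (Fin 5 → S)} (hV : CubeTiling c V)
    (F : Fin 5 → S → Bool) (hF : ∀ i s, F i (c s) = !F i s) :
    ∃ v ∈ V, ∀ i, F i (v i) = true := by
  have hinj : Set.InjOn (fun (v : Fin 5 → S) (i : Fin 5) => F i (v i)) V := by
    intro v hv w hw e
    by_contra hne
    obtain ⟨i, hi⟩ := hV.1 v hv w hw hne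
    have := congrFun e i
    simp only [hi, hF] at this
    simp at this
  have hcard : (V.image fun v i => F i (v i)) = Finset.univ := by
    apply Finset.eq_univ_of_card
    rw [Finset.card_image_of_injOn hinj, hV.2]
    simp
  have := Finset.mem_univ (fun _ : Fin 5 => true)
  rw [← hcard, Finset.mem_image] at this
  obtain ⟨v, hv, e⟩ := this
  exact ⟨v, hv, fun i => congrFun e i⟩

/-- A sign function which is positive at a given letter. -/
theorem exists_sign (hc : ∀ s, c (c s) = s) (hc' : ∀ s, c s ≠ s) (s : S) :
    ∃ f : S → Bool, (∀ x, f (c x) = !f x) ∧ f s = true := by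
  obtain ⟨g, hg⟩ := exists_orientation hc hc'
  cases h : g s with
  | true => exact ⟨g, hg, h⟩
  | false => exact ⟨fun x => !g x, fun x => by simp [hg], by simp [h]⟩

theorem cover_word (hc : ∀ s, c (c s) = s) (hc' : ∀ s, c s ≠ s) {V : Set (Fin 5 → S)}
    {q : Fin 5 → S} {t : ℕ} (H : Hyp c V q t) (w : Fin 5 → S) :
    ∃ v ∈ V, ¬ Dich c v w := by
  choose f hf hf' using fun i => exists_sign hc hc' (w i)
  obtain ⟨v, hv, h⟩ := H.cover f hf
  refine ⟨v, hv, ?_⟩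
  rintro ⟨i, hi⟩
  have := h i
  rw [hi, hf, hf'] at this
  simp at this

theorem flip_mem (hc : ∀ s, c (c s) = s) (hc' : ∀ s, c s ≠ s) {V : Set (Fin 5 → S)}
    {q : Fin 5 → S} (H : Hyp c V q 5) {u : Fin 5 → S} (hu : u ∈ V) (hq : InU c q u) (j : Fin 5) :
    Function.update u j (c (u j)) ∈ V := by
  obtain ⟨v, hv, h⟩ := cover_word hc hc' H (Function.update u j (c (u j)))
  have hj : v j ≠ u j := by
    intro e
    exact h ⟨j, by rw [Function.update_self, hc, e]⟩
  have hi : ∀ i, i ≠ j → v i ≠ c (u i) := by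
    intro i hij e
    exact h ⟨i, by rw [Function.update_of_ne hij, e]⟩
  have hne : v ≠ u := fun e => hj (by rw [e])
  obtain ⟨i, hvi⟩ := H.code v hv u hu hne
  have hij : i = j := by
    by_contra hcon
    exact hi i hcon hvi
  subst hij
  have h1 : numC c v u = 1 := by
    unfold numC
    rw [Finset.sum_eq_single i]
    · simp [hvi]
    · intro k _ hk
      simp [hi k hk]
    · simp
  have hvU : InU c q v := by
    by_contra hcon
    have := (H.ban v hv u hu h1 fun hh => hcon hh.1).2 (Or.inr hq)
    have := numC_add_numD_le (c := c) v u
    omega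
  have e : Function.update u i (c (u i)) = v := by
    funext k
    by_cases hk : k = i
    · subst hk
      rw [Function.update_self, hvi]
    · rw [Function.update_of_ne hk]
      rcases ((hq.symm hc).trans hc hvU) k with h2 | h2
      · exact h2.symm
      · exact absurd h2 (hi k hk)
  rw [e]
  exact hv

theorem all_mem (hc : ∀ s, c (c s) = s) (hc' : ∀ s, c s ≠ s) {V : Set (Fin 5 → S)}
    {q : Fin 5 → S} (H : Hyp c V q 5) (hq : q ∈ V) (A : Finset (Fin 5)) :
    (fun i => if i ∈ A then c (q i) else q i) ∈ V := by
  induction A using Finset.induction_on with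
  | empty => simpa using hq
  | insert j A hj ih =>
    have := flip_mem hc hc' H ih (fun i => by by_cases h : i ∈ A <;> simp [h]) j
    convert this using 1
    funext i
    by_cases hij : i = j
    · subst hij
      simp [hj]
    · rw [Function.update_of_ne hij]
      simp [hij]

theorem subset_U (hc : ∀ s, c (c s) = s) (hc' : ∀ s, c s ≠ s) {V : Set (Fin 5 → S)}
    {q : Fin 5 → S} (H : Hyp c V q 5) (hq : q ∈ V) {v : Fin 5 → S} (hv : v ∈ V) : InU c q v := by
  have hm := all_mem hc hc' H hq (Finset.univ.filter fun i => v i = c (q i))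
  by_contra hcon
  have hne : v ≠ fun i => if i ∈ (Finset.univ.filter fun i => v i = c (q i)) then c (q i)
      else q i := by
    intro e
    apply hcon
    intro i
    have := congrFun e i
    simp only [Finset.mem_filter, Finset.mem_univ, true_and] at this
    split_ifs at this with h
    · exact Or.inr h
    · exact Or.inl this
  obtain ⟨i, hi⟩ := H.code v hv _ hm hne
  simp only [Finset.mem_filter, Finset.mem_univ, true_and] at hi
  split_ifs at hi with h
  · rw [hc, h] at hi
    exact hc' _ hi
  · exact h hi

end Steps

/-- Corollary "nstt5" of the paper. -/
theorem complement_of_simple_component_contains_twin_pair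
    {S : Type} [Fintype S] [DecidableEq S] (c : S → S)
    (hc : ∀ s, c (c s) = s) (hc' : ∀ s, c s ≠ s)
    (V Q U : Finset (Fin 5 → S)) (hV : CubeTiling c V)
    (hns : ¬ SimpleCode c V)
    (hQne : Q.Nonempty) (hU : SimpleCubeTiling c U) (hQ : Q = V ∩ U) :
    ∃ v ∈ V \ Q, ∃ w ∈ V \ Q, ∃ i, TwinPair c v w i := by
  by_contra hno
  obtain ⟨q, hq⟩ := hQne
  rw [hQ, Finset.mem_inter] at hq
  obtain ⟨s, hs⟩ := hU
  have hsq : InU c s q := (hs q).1 hq.2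
  have hUq : ∀ v, v ∈ U ↔ InU c q v := fun v =>
    ⟨fun h => (hsq.symm hc).trans hc ((hs v).1 h), fun h => (hs v).2 (hsq.trans hc h)⟩
  have H : Hyp c (V : Set (Fin 5 → S)) q 1 := by
    refine ⟨hV.1, fun F hF => coverage hc' hV F hF, fun v hv z hz h1 h2 => ?_⟩
    have hD : numD c v z ≠ 0 := by
      intro h0
      have hcl : InU c z v := by
        intro i
        have := Finset.sum_eq_zero_iff.1 h0 i (Finset.mem_univ i)
        by_contra hcon
        simp [hcon] at this
      have hvn : ¬ InU c q v := fun h => h2 ⟨h, h.trans hc (hcl.symm hc)⟩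
      have hzn : ¬ InU c q z := fun h => h2 ⟨h.trans hc hcl, h⟩
      have hmem : ∀ x ∈ V, ¬ InU c q x → x ∈ V \ Q := by
        intro x hx hxn
        rw [hQ, Finset.mem_sdiff, Finset.mem_inter, hUq]
        exact ⟨hx, fun h => hxn h.2⟩
      have h1' : (Finset.univ.filter fun i => v i = c (z i)).card = 1 := by
        rw [← h1, numC, Finset.card_filter]
      obtain ⟨i, hi⟩ := Finset.card_eq_one.1 h1'
      have hiff : ∀ j, v j = c (z j) ↔ j = i := by
        intro j
        have := Finset.ext_iff.1 hi j
        simpa using this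
      refine hno ⟨v, hmem v hv hvn, z, hmem z hz hzn, i, (hiff i).2 rfl, fun j hj => ?_⟩
      rcases hcl j with h | h
      · exact h
      · exact absurd ((hiff j).1 h) hj
    exact ⟨hD, fun _ => by omega⟩
  have H5 := hyp_five hc hc' H
  exact hns fun i => ⟨q i, fun v hv => subset_U hc hc' H5 hq.1 hv i⟩

end PolyboxPaper
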